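/- Define F : ℝ → ℝ by F(θ) = √(6(1 − cos θ)/(5/2 + (1/2)·cos θ)). Then, as θ → 0, F(θ) − θ = O(θ⁵); that is, the leading cubic phase-error term cancels and the blended scheme is two orders more accurate than its constituents. -/

import Mathlib

open Real Filter Asymptotics Topology

/-!
Both sides of `6 (1 - cos θ) = θ² (5/2 + cos θ / 2)` expand as `3 θ² - θ⁴ / 4 + O(θ⁶)`: at `τ = 1/2`
the quartic terms agree. Hence `F(θ)² - θ² = O(θ⁶)`, and dividing by `F(θ) + |θ| ≥ |θ|` costs
exactly one order.
-/

theorem re_sum_range_ofReal_mul_I_pow_div_factorial (x : ℝ) (n : ℕ) :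
    (∑ m ∈ Finset.range (2 * n), ((x : ℂ) * Complex.I) ^ m / (m.factorial : ℂ)).re =
      ∑ k ∈ Finset.range n, (-1) ^ k * x ^ (2 * k) / ((2 * k).factorial : ℝ) := by
  induction n with
  | zero => simp
  | succ n ih =>
    have even_term : ((x : ℂ) * Complex.I) ^ (2 * n) / ((2 * n).factorial : ℂ) =
        (((-1) ^ n * x ^ (2 * n) / ((2 * n).factorial : ℝ) : ℝ) : ℂ) := by
      push_cast
      rw [mul_pow, pow_mul Complex.I, Complex.I_sq, mul_comm]
    have odd_term : ((x : ℂ) * Complex.I) ^ (2 * n + 1) / ((2 * n + 1).factorial : ℂ) =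
        (((-1) ^ n * x ^ (2 * n + 1) / ((2 * n + 1).factorial : ℝ) : ℝ) : ℂ) * Complex.I := by
      push_cast
      rw [mul_pow, pow_succ Complex.I, pow_mul Complex.I, Complex.I_sq]
      ring
    rw [Nat.mul_succ, Finset.sum_range_succ, Finset.sum_range_succ, even_term, odd_term,
      Finset.sum_range_succ, Complex.add_re, Complex.add_re, ih, Complex.ofReal_re,
      Complex.re_ofReal_mul, Complex.I_re, mul_zero, add_zero]

theorem cos_sub_sum_range_isBigO_pow (n : ℕ) :
    (fun x : ℝ => cos x -
        ∑ k ∈ Finset.range n, (-1) ^ k * x ^ (2 * k) / ((2 * k).factorial : ℝ))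
      =O[𝓝 0] fun x : ℝ => x ^ (2 * n) := by
  have tendsto_mul_I : Tendsto (fun x : ℝ => (x : ℂ) * Complex.I) (𝓝 0) (𝓝 0) :=
    Continuous.tendsto' (by fun_prop) 0 0 (by simp)
  have exp_remainder : (fun x : ℝ => Complex.exp (x * Complex.I) -
        ∑ m ∈ Finset.range (2 * n), ((x : ℂ) * Complex.I) ^ m / (m.factorial : ℂ))
      =O[𝓝 0] fun x : ℝ => ((x : ℂ) * Complex.I) ^ (2 * n) :=
    (Complex.exp_sub_sum_range_isBigO_pow (2 * n)).comp_tendsto tendsto_mul_I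
  have exp_remainder_real := exp_remainder.trans <|
    isBigO_of_le (g := fun x : ℝ => x ^ (2 * n)) (𝓝 0) fun x => by simp
  refine (isBigO_of_le _ fun x => ?_).trans exp_remainder_real
  rw [← re_sum_range_ofReal_mul_I_pow_div_factorial, ← Complex.exp_ofReal_mul_I_re,
    ← Complex.sub_re]
  exact Complex.abs_re_le_norm _

theorem abs_sqrt_sub_mul_le {a b : ℝ} (ha : 0 ≤ a) (hb : 0 ≤ b) :
    |√a - b| * b ≤ |a - b ^ 2| :=
  calc |√a - b| * b
      ≤ |√a - b| * (√a + b) := by gcongr; exact le_add_of_nonneg_left (sqrt_nonneg a)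
    _ = |√a - b| * |√a + b| := by rw [abs_of_nonneg (add_nonneg (sqrt_nonneg a) hb)]
    _ = |√a ^ 2 - b ^ 2| := by rw [← abs_mul, sq_sub_sq, mul_comm]
    _ = |a - b ^ 2| := by rw [sq_sqrt ha]

theorem isBigO_sqrt_sub_abs {α : Type*} {l : Filter α} {f g h : α → ℝ} (hf : ∀ᶠ x in l, 0 ≤ f x)
    (hfg : (fun x => f x - g x ^ 2) =O[l] fun x => g x * h x) :
    (fun x => √(f x) - |g x|) =O[l] h := by
  obtain ⟨C, hC, bound⟩ := hfg.exists_nonneg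
  refine .of_bound C ?_
  filter_upwards [bound.bound, hf] with x hx hfx
  rw [norm_mul, norm_eq_abs, norm_eq_abs, norm_eq_abs] at hx
  rcases eq_or_ne (g x) 0 with hg | hg
  · have hf0 : f x = 0 := by simpa [hg] using hx
    simpa [hf0, hg] using mul_nonneg hC (abs_nonneg (h x))
  · refine le_of_mul_le_mul_right ?_ (abs_pos.mpr hg)
    calc ‖√(f x) - |g x|‖ * |g x|
        ≤ |f x - |g x| ^ 2| := abs_sqrt_sub_mul_le hfx (abs_nonneg (g x))
      _ = |f x - g x ^ 2| := by rw [sq_abs]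
      _ ≤ C * (|g x| * |h x|) := hx
      _ = C * |h x| * |g x| := by ring

-- The symbols of the stiffness and mass stencils appear here scaled by the common factor `3`.
theorem blended_stiffness_sub_sq_mul_mass_isBigO :
    (fun θ : ℝ => 6 * (1 - cos θ) - θ ^ 2 * (5 / 2 + (1 / 2) * cos θ))
      =O[𝓝 0] fun θ : ℝ => θ ^ 6 := by
  have coeff_bounded : (fun θ : ℝ => -(6 + θ ^ 2 / 2)) =O[𝓝 0] fun _ => (1 : ℝ) :=
    (Continuous.tendsto (by fun_prop) 0).isBigO_one ℝ
  have cos_term := (coeff_bounded.mul (cos_sub_sum_range_isBigO_pow 3)).congr_right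
    fun θ => one_mul (θ ^ 6)
  have quartic_cancellation (θ : ℝ) :
      -(6 + θ ^ 2 / 2) * (cos θ -
          ∑ k ∈ Finset.range 3, (-1) ^ k * θ ^ (2 * k) / ((2 * k).factorial : ℝ)) -
        1 / 48 * θ ^ 6 = 6 * (1 - cos θ) - θ ^ 2 * (5 / 2 + (1 / 2) * cos θ) := by
    simp only [Finset.sum_range_succ, Finset.sum_range_zero, Nat.factorial]
    push_cast
    ring
  exact (cos_term.sub (isBigO_const_mul_self (1 / 48) _ _)).congr_left quartic_cancellation

theorem blended_mass_pos (θ : ℝ) : 0 < 5 / 2 + (1 / 2) * cos θ := by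
  linarith [neg_one_le_cos θ]

theorem blended_frequency_sq_nonneg (θ : ℝ) :
    0 ≤ 6 * (1 - cos θ) / (5 / 2 + (1 / 2) * cos θ) :=
  div_nonneg (by linarith [cos_le_one θ]) (blended_mass_pos θ).le

theorem blended_frequency_sq_sub_sq_isBigO :
    (fun θ : ℝ => 6 * (1 - cos θ) / (5 / 2 + (1 / 2) * cos θ) - θ ^ 2)
      =O[𝓝 0] fun θ : ℝ => θ ^ 6 := by
  have inv_mass_bounded :
      (fun θ : ℝ => (5 / 2 + (1 / 2) * cos θ)⁻¹) =O[𝓝 0] fun _ => (1 : ℝ) :=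
    (Continuous.tendsto
      (.inv₀ (by fun_prop) fun θ => (blended_mass_pos θ).ne') 0).isBigO_one ℝ
  refine (blended_stiffness_sub_sq_mul_mass_isBigO.mul inv_mass_bounded).congr (fun θ => ?_)
    fun θ => mul_one _
  rw [← div_eq_mul_inv, sub_div, mul_div_cancel_right₀ _ (blended_mass_pos θ).ne']

theorem optimally_blended_linear_dispersion_superconvergence_general :
    (fun θ : ℝ => √(6 * (1 - cos θ) / (5 / 2 + (1 / 2) * cos θ)) - |θ|)
      =O[𝓝 0] fun θ : ℝ => θ ^ 5 :=
  isBigO_sqrt_sub_abs (.of_forall blended_frequency_sq_nonneg)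
    (blended_frequency_sq_sub_sq_isBigO.congr_right fun θ => pow_succ' θ 5)

/-- Superconvergence of the optimally-blended (`τ = 1/2`) linear
spectral–finite element scheme of Ainsworth and Wajid: the discrete frequency
function `F(θ) = √(6(1 − cos θ)/(5/2 + cos θ/2))` satisfies
`F(θ) − θ = O(θ⁵)` as `θ → 0`; the leading cubic phase-error term cancels and
the blended scheme is two orders more accurate than its constituents. -/
theorem optimally_blended_linear_dispersion_superconvergence :
    (fun θ : ℝ =>
        Real.sqrt (6 * (1 - Real.cos θ) / (5 / 2 + (1 / 2) * Real.cos θ)) - θ)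
      =O[𝓝[>] (0 : ℝ)] fun θ : ℝ => θ ^ 5 := by
  refine (optimally_blended_linear_dispersion_superconvergence_general.mono
    nhdsWithin_le_nhds).congr' ?_ .rfl
  filter_upwards [self_mem_nhdsWithin] with θ hθ using by rw [abs_of_pos hθ]
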